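/- arXiv:2007.05384 — 3 statements merged into one kernel-verified Lean document; each statement's English description precedes it below -/
import Mathlib

section
/- Let δ ∈ (0, 2^{−1/3}). For x ∈ [0,2] define s_0 := x + δ², c_0 := x + δ² − 1, and recursively s_{n+1} := s_n − (s_n c_n)/2, c_{n+1} := c_n² (c_n − 3)/4. Then for every natural number n satisfying n ≥ ( log( log(1/2) + 3 log(δ^{−1}) ) + 2 log(δ^{−1}) ) / log 2, one has sup_{x∈[0,2]} | √x − s_n | ≤ 2δ. -/
open Real

/-- The residual recursion contracts quadratically on `[-1, 0]`. -/
lemma sqrt_iteration_residual_bound {c : ℕ → ℝ} {a : ℝ} (ha : 0 ≤ a) (ha1 : a ≤ 1)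
    (h0 : -a ≤ c 0) (h0' : c 0 ≤ 0)
    (hc : ∀ n, c (n + 1) = (c n) ^ 2 * (c n - 3) / 4) (n : ℕ) :
    -a ^ 2 ^ n ≤ c n ∧ c n ≤ 0 := by
  induction n with
  | zero => simpa using ⟨h0, h0'⟩
  | succ n ih =>
    obtain ⟨h1, h2⟩ := ih
    have h3 : a ^ 2 ^ n ≤ 1 := pow_le_one₀ ha ha1
    have h5 : c n ^ 2 ≤ (a ^ 2 ^ n) ^ 2 := by nlinarith
    rw [hc, pow_succ, pow_mul]
    constructor <;> nlinarith [sq_nonneg (c n)]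

lemma sqrt_iteration_sq_eq {s c : ℕ → ℝ} {y : ℝ} (h0 : s 0 ^ 2 = y * (1 + c 0))
    (hs : ∀ n, s (n + 1) = s n - s n * c n / 2)
    (hc : ∀ n, c (n + 1) = (c n) ^ 2 * (c n - 3) / 4) (n : ℕ) :
    s n ^ 2 = y * (1 + c n) := by
  induction n with
  | zero => exact h0
  | succ n ih =>
    rw [hs, hc]
    linear_combination (1 - c n / 2) ^ 2 * ih

lemma sqrt_iteration_monotone {s c : ℕ → ℝ} (h0 : 0 ≤ s 0) (hc : ∀ n, c n ≤ 0)
    (hs : ∀ n, s (n + 1) = s n - s n * c n / 2) (n : ℕ) : s 0 ≤ s n := by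
  induction n with
  | zero => exact le_rfl
  | succ n ih =>
    rw [hs]
    nlinarith [hc n, mul_nonneg (h0.trans ih) (neg_nonneg.2 (hc n))]

/-- A residual in `[-e, 0]` controls the error of an approximate square root of `x + δ²`. -/
lemma sqrt_sub_bounds_of_residual {x δ s c e : ℝ} (hx : 0 ≤ x) (hδ : 0 ≤ δ) (hs : 0 ≤ s)
    (h : s ^ 2 = (x + δ ^ 2) * (1 + c)) (hec : -e ≤ c) (hc : c ≤ 0) (he : e ≤ 1) :
    √x - s ≤ √(x + δ ^ 2) * e ∧ s ≤ √x + δ := by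
  have hy : 0 ≤ x + δ ^ 2 := by positivity
  have hsx := sq_sqrt hx
  have hsy := sq_sqrt hy
  have hx0 := sqrt_nonneg x
  have hy0 := sqrt_nonneg (x + δ ^ 2)
  have hxy : √x ≤ √(x + δ ^ 2) := sqrt_le_sqrt (by nlinarith)
  constructor
  · have : √(x + δ ^ 2) * (1 - e) ≤ s := by
      refine le_of_sq_le_sq ?_ hs
      rw [mul_pow, hsy, h]
      gcongr
      nlinarith
    linarith
  · refine le_of_sq_le_sq ?_ (by positivity)
    rw [h]
    nlinarith [mul_nonneg hx0 hδ, mul_nonneg hy (neg_nonneg.2 hc)]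

/-- The iteration threshold, exponentiated. -/
lemma exp_neg_sq_mul_two_pow_le {δ : ℝ} (hδ : 0 < δ) (hδ3 : δ ^ 3 < 1 / 2) {n : ℕ}
    (hn : (log (log (1 / 2) + 3 * log δ⁻¹) + 2 * log δ⁻¹) / log 2 ≤ (n : ℝ)) :
    exp (-(δ ^ 2 * 2 ^ n)) ≤ 2 * δ ^ 3 := by
  have hL : log (1 / 2) + 3 * log δ⁻¹ = -log (2 * δ ^ 3) := by
    rw [log_mul (by norm_num) (by positivity), log_pow, log_inv, one_div, log_inv]
    push_cast
    ring
  have hLpos : 0 < -log (2 * δ ^ 3) := neg_pos.2 (log_neg (by positivity) (by linarith))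
  rw [hL, div_le_iff₀ (log_pos (by norm_num)), log_inv] at hn
  have h1 : log (-log (2 * δ ^ 3)) ≤ log (δ ^ 2 * 2 ^ n) := by
    have h := log_mul (pow_pos hδ 2).ne' (pow_pos (two_pos (α := ℝ)) n).ne'
    rw [log_pow, log_pow] at h
    push_cast at h
    linarith
  have h2 := (log_le_log_iff hLpos (by positivity)).1 h1
  rw [← le_log_iff_exp_le (by positivity)]
  linarith

lemma one_sub_pow_le_exp_neg_mul {a : ℝ} (ha : a ≤ 1) (m : ℕ) :
    (1 - a) ^ m ≤ exp (-(a * m)) := by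
  calc (1 - a) ^ m ≤ exp (-a) ^ m := pow_le_pow_left₀ (by linarith) (one_sub_le_exp_neg a) m
    _ = exp (-(a * m)) := by rw [← exp_nat_mul]; ring_nf


/-- When the threshold already holds at step `0`, so does the error bound. -/
lemma sqrt_sub_initial_bounds {x δ : ℝ} (hδ0 : 0 < δ) (hδ45 : δ < 4 / 5)
    (hexp : exp (-δ ^ 2) ≤ 2 * δ ^ 3) (hx0 : 0 ≤ x) (hx2 : x ≤ 2) :
    -(2 * δ) ≤ √x - (x + δ ^ 2) ∧ √x - (x + δ ^ 2) ≤ 2 * δ := by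
  have h1 := one_sub_le_exp_neg (δ ^ 2)
  have hδ12 : 1 / 2 < δ := by
    by_contra! h
    have h3 := pow_le_pow_left₀ hδ0.le h 3
    have h2 := pow_le_pow_left₀ hδ0.le h 2
    linarith
  have hr : √x ≤ √2 := sqrt_le_sqrt hx2
  have h2 := sq_sqrt (show (0 : ℝ) ≤ 2 by norm_num)
  have hxx := sq_sqrt hx0
  have h2_lower : 1.4 < √2 := (lt_sqrt (by norm_num)).2 (by norm_num)
  constructor
  · have hm := mul_nonneg (sub_nonneg.2 hr)
      (show 0 ≤ √2 + √x - 1 by linarith [sqrt_nonneg x])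
    have hd := mul_nonneg (sub_nonneg.2 hδ12.le) (show 0 ≤ 3 / 2 - δ by linarith)
    linarith
  · linarith [sq_nonneg (√x - 1 / 2), sq_nonneg δ]

/-- Lower bound on the first iterate `y (3 - y) / 2` for `y = x + δ²`. -/
lemma le_two_mul_add_first_iterate {x δ : ℝ} (hδ4 : 1 / 4 ≤ δ) (hδ45 : δ < 4 / 5)
    (hx2 : x ≤ 2) (hy : 1 ≤ x + δ ^ 2) :
    1.4143 ≤ 2 * δ + (x + δ ^ 2) * (3 - (x + δ ^ 2)) / 2 := by
  have h1 := mul_nonneg (sub_nonneg.2 hx2) (show 0 ≤ x + 2 * δ ^ 2 - 1 by nlinarith)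
  have h2 := mul_nonneg (sub_nonneg.2 hδ4) (sub_nonneg.2 hδ45.le)
  have h3 : δ ^ 2 ≤ (4 / 5) ^ 2 := pow_le_pow_left₀ (by linarith) hδ45.le 2
  have h4 := mul_le_mul_of_nonneg_left h3 (sq_nonneg δ)
  linarith

/-- Let `δ ∈ (0, 2^{−1/3})`. For `x ∈ [0,2]` run the square-root iteration with shifted
initial data `s_0 = x + δ²`, `c_0 = x + δ² − 1`. Then for every `n` with
`n ≥ (log(log(1/2) + 3 log δ⁻¹) + 2 log δ⁻¹)/log 2`, one has
`sup_{x∈[0,2]} |√x − s_n| ≤ 2δ`. -/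
theorem sqrt_iteration_shifted_uniform (δ : ℝ)
    (hδ : δ ∈ Set.Ioo (0 : ℝ) ((2 : ℝ) ^ (-(1 / 3 : ℝ))))
    (s c : ℝ → ℕ → ℝ)
    (hs0 : ∀ x, s x 0 = x + δ ^ 2) (hc0 : ∀ x, c x 0 = x + δ ^ 2 - 1)
    (hs : ∀ x n, s x (n + 1) = s x n - s x n * c x n / 2)
    (hc : ∀ x n, c x (n + 1) = (c x n) ^ 2 * (c x n - 3) / 4) :
    ∀ n : ℕ,
      (Real.log (Real.log (1 / 2) + 3 * Real.log δ⁻¹) + 2 * Real.log δ⁻¹) / Real.log 2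
        ≤ (n : ℝ) →
      ∀ x ∈ Set.Icc (0 : ℝ) 2, |Real.sqrt x - s x n| ≤ 2 * δ := by
  intro n hn x ⟨hx0, hx2⟩
  obtain ⟨hδ0, hδ1⟩ := hδ
  have hδ3 : δ ^ 3 < 1 / 2 := by
    have h := pow_lt_pow_left₀ hδ1 hδ0.le (n := 3) (by norm_num)
    rw [← Real.rpow_natCast (2 ^ _), ← Real.rpow_mul (by norm_num)] at h
    norm_num at h
    exact h
  have hδ45 : δ < 4 / 5 := by
    by_contra! h
    have := pow_le_pow_left₀ (by norm_num) h 3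
    norm_num at this
    linarith
  have hsq0 := sq_nonneg δ
  have hsq1 : δ ^ 2 ≤ 1 := pow_le_one₀ hδ0.le (by linarith)
  have hexp := exp_neg_sq_mul_two_pow_le hδ0 hδ3 hn
  have hsq := sqrt_iteration_sq_eq (y := x + δ ^ 2) (by rw [hs0, hc0]; ring) (hs x) (hc x)
  have hr2 : √x ≤ √2 := Real.sqrt_le_sqrt hx2
  have hr2' : √2 < 1.4143 := (Real.sqrt_lt' (by norm_num)).2 (by norm_num)
  have hyy : √(x + δ ^ 2) ^ 2 = x + δ ^ 2 := Real.sq_sqrt (by positivity)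
  rw [abs_le]
  rcases le_total (x + δ ^ 2) 1 with hy | hy
  · have hcb := sqrt_iteration_residual_bound (c := c x) (a := 1 - δ ^ 2) (by linarith)
      (by linarith) (by rw [hc0]; linarith) (by rw [hc0]; linarith) (hc x)
    have hc_nonpos := fun k => (hcb k).2
    have h0 : 0 ≤ s x 0 := by rw [hs0]; positivity
    have hsn : 0 ≤ s x n := h0.trans (sqrt_iteration_monotone h0 hc_nonpos (hs x) n)
    have he1 : (1 - δ ^ 2) ^ 2 ^ n ≤ 1 := pow_le_one₀ (by linarith) (by linarith)
    have he : (1 - δ ^ 2) ^ 2 ^ n ≤ 2 * δ ^ 3 := by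
      have := one_sub_pow_le_exp_neg_mul hsq1 (2 ^ n)
      push_cast at this
      linarith
    obtain ⟨h1, h2⟩ := sqrt_sub_bounds_of_residual hx0 hδ0.le hsn (hsq n) (hcb n).1
      (hc_nonpos n) he1
    have hy1 : √(x + δ ^ 2) ≤ 1 := Real.sqrt_le_one.2 hy
    have he0 : 0 ≤ (1 - δ ^ 2) ^ 2 ^ n := pow_nonneg (by linarith) _
    refine ⟨by linarith, ?_⟩
    have h3 := mul_le_of_le_one_left he0 hy1
    have h4 := mul_le_of_le_one_right hδ0.le hsq1
    linarith
  rcases n with _ | n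
  · rw [hs0]
    exact sqrt_sub_initial_bounds hδ0 hδ45 (by simpa using hexp) hx0 hx2
  · have hs1 : s x 1 = (x + δ ^ 2) * (3 - (x + δ ^ 2)) / 2 := by
      rw [hs, hs0, hc0]; ring
    have hc1 : 1 + c x 1 = (x + δ ^ 2) * (3 - (x + δ ^ 2)) ^ 2 / 4 := by
      rw [hc, hc0]; ring
    have hc1_nonpos : c x 1 ≤ 0 := by
      rw [hc]
      have : c x 0 - 3 ≤ 0 := by rw [hc0]; linarith
      linarith [mul_nonpos_of_nonneg_of_nonpos (sq_nonneg (c x 0)) this]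
    have h0 : 0 ≤ s x 1 := by
      rw [hs1]
      exact div_nonneg (mul_nonneg (by linarith) (by linarith)) zero_le_two
    have hshift : ∀ a : ℝ, 0 ≤ a → a ≤ 1 → -a ≤ c x 1 → -a ^ 2 ^ n ≤ c x (n + 1) :=
      fun a ha ha1 h => (sqrt_iteration_residual_bound (c := fun k => c x (k + 1)) ha ha1 h
        hc1_nonpos (fun k => hc x (k + 1)) n).1
    have hc_lower : -1 ≤ c x 1 := by
      have : 0 ≤ 1 + c x 1 := by rw [hc1]; positivity
      linarith
    have hc_nonpos := fun k => (sqrt_iteration_residual_bound (c := fun k => c x (k + 1))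
      zero_le_one le_rfl hc_lower hc1_nonpos (fun k => hc x (k + 1)) k).2
    have hmono : s x 1 ≤ s x (n + 1) := sqrt_iteration_monotone (s := fun k => s x (k + 1)) h0
      hc_nonpos (fun k => hs x (k + 1)) n
    have hsn := h0.trans hmono
    have hup := (sqrt_sub_bounds_of_residual hx0 hδ0.le hsn (hsq (n + 1)) (e := 1)
      (by simpa using hshift 1 zero_le_one le_rfl hc_lower) (hc_nonpos n) le_rfl).2
    refine ⟨by linarith, ?_⟩
    rcases le_total (1 / 4) δ with hδ4 | hδ4
    · have := le_two_mul_add_first_iterate hδ4 hδ45 hx2 hy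
      linarith
    · have hδ16 : δ ^ 2 ≤ (1 / 4) ^ 2 := pow_le_pow_left₀ hδ0.le hδ4 2
      have ha : -(1 - δ ^ 2) ≤ c x 1 := by
        have h3 : (15 / 16) ^ 2 ≤ (3 - (x + δ ^ 2)) ^ 2 :=
          pow_le_pow_left₀ (by norm_num) (by linarith) 2
        have := mul_le_mul hy h3 (by norm_num) (by linarith)
        linarith
      have hb := hshift _ (by linarith) (by linarith) ha
      set E := (1 - δ ^ 2) ^ 2 ^ n with hE
      have hE0 : 0 ≤ E := pow_nonneg (by linarith) _
      have hE1 : E ≤ 1 := pow_le_one₀ (by linarith) (by linarith)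
      have hE2 : E ^ 2 ≤ 2 * δ ^ 3 := by
        have := one_sub_pow_le_exp_neg_mul hsq1 (2 ^ (n + 1))
        push_cast at this
        rw [hE, ← pow_mul, ← pow_succ]
        linarith
      have h1 := (sqrt_sub_bounds_of_residual hx0 hδ0.le hsn (hsq (n + 1)) hb
        (hc_nonpos n) hE1).1
      refine h1.trans (le_of_sq_le_sq ?_ (by positivity))
      rw [mul_pow, hyy]
      calc (x + δ ^ 2) * E ^ 2 ≤ 3 * (2 * δ ^ 3) := by gcongr; linarith
        _ ≤ (2 * δ) ^ 2 := by linarith [mul_le_mul_of_nonneg_right hδ4 hsq0]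
end

section
/- For all real numbers a, b, c > 1, the integral ∫₀^∞ a^y c^{−b^y} dy is finite and satisfies ∫₀^∞ a^y c^{−b^y} dy ≤ k! / ( (log c)^{k+1} · log b ), where k := ⌈ log a / log b ⌉. -/
open Real MeasureTheory

/-- The integral of `u ^ k * exp (-(L * u))` over the positive half-line. -/
theorem integral_pow_mul_exp_neg_mul_Ioi (k : ℕ) {L : ℝ} (hL : 0 < L) :
    ∫ u in Set.Ioi (0 : ℝ), u ^ k * Real.exp (-(L * u)) = k.factorial / L ^ (k + 1) := by
  have h := Real.integral_rpow_mul_exp_neg_mul_Ioi (a := (k : ℝ) + 1) (r := L) (by positivity) hL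
  rw [Real.Gamma_nat_eq_factorial, add_sub_cancel_right] at h
  simp only [Real.rpow_natCast] at h
  rw [h, show (k : ℝ) + 1 = ((k + 1 : ℕ) : ℝ) by push_cast; ring, Real.rpow_natCast]
  rw [one_div, inv_pow, div_eq_inv_mul]

theorem integrableOn_pow_mul_exp_neg_mul_Ioi (k : ℕ) {L : ℝ} (hL : 0 < L) :
    IntegrableOn (fun u : ℝ => u ^ k * Real.exp (-(L * u))) (Set.Ioi 0) := by
  apply Integrable.of_integral_ne_zero
  rw [integral_pow_mul_exp_neg_mul_Ioi k hL]
  positivity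

/-- For all real `a, b, c > 1`, the integral `∫₀^∞ a^y c^{−b^y} dy` is finite and
bounded by `k!/((log c)^{k+1} log b)` with `k = ⌈log a / log b⌉`. -/
theorem integral_exp_double_exp_bound (a b c : ℝ) (ha : 1 < a) (hb : 1 < b) (hc : 1 < c) :
    IntegrableOn (fun y : ℝ => a ^ y * c ^ (-(b ^ y))) (Set.Ioi 0)
    ∧ (∫ y in Set.Ioi (0 : ℝ), a ^ y * c ^ (-(b ^ y)))
        ≤ (Nat.ceil (Real.log a / Real.log b)).factorial
          / (Real.log c ^ (Nat.ceil (Real.log a / Real.log b) + 1) * Real.log b) := by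
  have hb0 : 0 < b := by linarith
  have ha0 : 0 < a := by linarith
  have hc0 : 0 < c := by linarith
  have hlb := Real.log_pos hb
  have hlc := Real.log_pos hc
  have hk := Nat.le_ceil (Real.log a / Real.log b)
  set k := Nat.ceil (Real.log a / Real.log b)
  set g : ℝ → ℝ := fun u => u ^ k * Real.exp (-(Real.log c * u)) with hg
  set f' : ℝ → ℝ := fun y => b ^ y * Real.log b
  have hderiv : ∀ y ∈ Set.Ioi (0 : ℝ), HasDerivWithinAt (fun y => b ^ y) (f' y) (Set.Ioi 0) y :=
    fun y _ => (Real.hasStrictDerivAt_const_rpow hb0 y).hasDerivAt.hasDerivWithinAt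
  have hinj : Set.InjOn (fun y : ℝ => b ^ y) (Set.Ioi 0) :=
    (Real.strictMono_rpow_of_base_gt_one hb).injective.injOn
  have hsub : (fun y : ℝ => b ^ y) '' Set.Ioi 0 ⊆ Set.Ioi 0 := by
    rintro _ ⟨y, -, rfl⟩
    exact Real.rpow_pos_of_pos hb0 y
  have hgi : IntegrableOn g (Set.Ioi 0) := integrableOn_pow_mul_exp_neg_mul_Ioi k hlc
  have hGi : IntegrableOn (fun y => |f' y| • g (b ^ y)) (Set.Ioi 0) :=
    (integrableOn_image_iff_integrableOn_abs_deriv_smul measurableSet_Ioi hderiv hinj g).1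
      (hgi.mono_set hsub)
  have hG : ∫ y in Set.Ioi (0 : ℝ), |f' y| • g (b ^ y) ≤ k.factorial / Real.log c ^ (k + 1) := by
    rw [← integral_image_eq_integral_abs_deriv_smul measurableSet_Ioi hderiv hinj g,
      ← integral_pow_mul_exp_neg_mul_Ioi k hlc]
    refine setIntegral_mono_set hgi ?_ hsub.eventuallyLE
    filter_upwards [ae_restrict_mem measurableSet_Ioi] with u hu
    have hu0 : (0 : ℝ) < u := hu
    simp only [hg, Pi.zero_apply]
    positivity
  have hle : ∀ y ∈ Set.Ioi (0 : ℝ),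
      a ^ y * c ^ (-(b ^ y)) ≤ (Real.log b)⁻¹ * (|f' y| • g (b ^ y)) := by
    intro y hy
    have hy0 : (0 : ℝ) < y := hy
    have hbpos := Real.rpow_pos_of_pos hb0 y
    have hb1 : 1 ≤ b ^ y := Real.one_le_rpow hb.le hy0.le
    have hay : a ^ y ≤ (b ^ y) ^ k := by
      rw [← Real.rpow_mul_natCast hb0.le, Real.rpow_def_of_pos ha0, Real.rpow_def_of_pos hb0,
        Real.exp_le_exp]
      rw [div_le_iff₀ hlb] at hk
      nlinarith
    have hpow : (b ^ y) ^ k ≤ b ^ y * (b ^ y) ^ k := le_mul_of_one_le_left (by positivity) hb1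
    have hcy : c ^ (-(b ^ y)) = Real.exp (-(Real.log c * b ^ y)) := by
      rw [Real.rpow_def_of_pos hc0, mul_neg]
    have hrhs : (Real.log b)⁻¹ * (|f' y| • g (b ^ y))
        = b ^ y * (b ^ y) ^ k * Real.exp (-(Real.log c * b ^ y)) := by
      rw [abs_of_pos (mul_pos hbpos hlb), smul_eq_mul]
      simp only [hg]
      field_simp
    rw [hrhs, hcy]
    gcongr
    exact hay.trans hpow
  have hint : IntegrableOn (fun y : ℝ => a ^ y * c ^ (-(b ^ y))) (Set.Ioi 0) := by
    refine Integrable.mono' (hGi.const_mul (Real.log b)⁻¹) ?_ ?_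
    · exact Measurable.aestronglyMeasurable (by fun_prop)
    · filter_upwards [ae_restrict_mem measurableSet_Ioi] with y hy
      rw [Real.norm_of_nonneg (by positivity)]
      exact hle y hy
  refine ⟨hint, (setIntegral_mono_on hint (hGi.const_mul _) measurableSet_Ioi hle).trans ?_⟩
  rw [integral_const_mul, ← div_div, div_eq_inv_mul _ (Real.log b)]
  gcongr
end

section
/- Let δ, ε, η ∈ (0,1) and c₀ ∈ ℝ satisfy (1 + η)|c₀| ≤ 1 and (1 + η^{−1})√ε ≤ 1, and let N ∈ ℕ with N ≥ 2 and √ε ≤ 1/(N − 1). Suppose (b_n)_{n≥0} is a sequence of nonnegative real numbers with b₀ = |c₀| and b_n ≤ b_{n−1}² + ε for all 1 ≤ n ≤ N. Then for every n with 1 ≤ n ≤ N one has b_n ≤ |c₀|^{2^{n−1}+1} + n ε, and in particular b_n ≤ |c₀|^{2^{n−1}} + n ε. -/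
/-- Young's inequality for the square of a sum, with weight `η`. -/
lemma add_sq_le_one_add_mul_sq {η : ℝ} (hη : 0 < η) (x y : ℝ) :
    (x + y) ^ 2 ≤ (1 + η) * x ^ 2 + (1 + η⁻¹) * y ^ 2 := by
  have h : (1 + η) * x ^ 2 + (1 + η⁻¹) * y ^ 2 - (x + y) ^ 2 = η⁻¹ * (η * x - y) ^ 2 := by
    field_simp
    ring
  have : 0 ≤ η⁻¹ * (η * x - y) ^ 2 := by positivity
  linarith

/-- Stability of the perturbed square-root iteration: if `(1 + η)|c₀| ≤ 1`,
`(1 + η⁻¹)√ε ≤ 1`, `N ≥ 2`, `√ε ≤ 1/(N − 1)`, and `b₀ = |c₀|`,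
`b_n ≤ b_{n−1}² + ε` for `1 ≤ n ≤ N`, then for all `1 ≤ n ≤ N`
`b_n ≤ |c₀|^{2^{n−1}+1} + n ε`, and in particular `b_n ≤ |c₀|^{2^{n−1}} + n ε`. -/
theorem perturbed_sqrt_iteration_bound (δ ε η : ℝ)
    (hδ : δ ∈ Set.Ioo (0 : ℝ) 1) (hε : ε ∈ Set.Ioo (0 : ℝ) 1) (hη : η ∈ Set.Ioo (0 : ℝ) 1)
    (c₀ : ℝ) (hc₀ : (1 + η) * |c₀| ≤ 1)
    (hεη : (1 + η⁻¹) * Real.sqrt ε ≤ 1)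
    (N : ℕ) (hN : 2 ≤ N) (hεN : Real.sqrt ε ≤ 1 / ((N : ℝ) - 1))
    (b : ℕ → ℝ) (hb_nonneg : ∀ n, 0 ≤ b n) (hb0 : b 0 = |c₀|)
    (hb : ∀ n, 1 ≤ n → n ≤ N → b n ≤ (b (n - 1)) ^ 2 + ε) :
    ∀ n, 1 ≤ n → n ≤ N →
      b n ≤ |c₀| ^ (2 ^ (n - 1) + 1) + (n : ℝ) * ε
      ∧ b n ≤ |c₀| ^ (2 ^ (n - 1)) + (n : ℝ) * ε := by
  obtain ⟨hε0, -⟩ := hε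
  obtain ⟨hη0, -⟩ := hη
  have hc0 : 0 ≤ |c₀| := abs_nonneg c₀
  have hc1 : |c₀| ≤ 1 := by nlinarith
  have key : ∀ n, n + 1 ≤ N → b (n + 1) ≤ |c₀| ^ (2 ^ n + 1) + ((n + 1 : ℕ) : ℝ) * ε := by
    intro n
    induction n with
    | zero =>
      intro hn
      simpa [hb0] using hb 1 le_rfl hn
    | succ n ih =>
      intro hn
      set m : ℝ := ((n + 1 : ℕ) : ℝ) with hm
      set x : ℝ := |c₀| ^ (2 ^ n + 1) with hx
      have hm0 : 0 ≤ m := Nat.cast_nonneg _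
      have hmN : m ≤ (N : ℝ) - 1 := by
        have : ((n + 1 + 1 : ℕ) : ℝ) ≤ N := by exact_mod_cast hn
        push_cast at this hm
        linarith
      have hN1 : (0 : ℝ) < (N : ℝ) - 1 := by
        have : (2 : ℝ) ≤ N := by exact_mod_cast hN
        linarith
      have hms : √ε * m ≤ 1 :=
        (mul_le_mul_of_nonneg_left hmN (Real.sqrt_nonneg ε)).trans ((le_div_iff₀ hN1).mp hεN)
      have herr : (1 + η⁻¹) * (m * ε) ^ 2 ≤ m * ε := by
        have h1 : ((1 + η⁻¹) * √ε) * (√ε * m) ≤ 1 :=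
          mul_le_one₀ hεη (by positivity) hms
        calc (1 + η⁻¹) * (m * ε) ^ 2
            = (1 + η⁻¹) * (√ε * √ε * m) * (m * ε) := by
              rw [Real.mul_self_sqrt hε0.le]; ring
          _ = ((1 + η⁻¹) * √ε) * (√ε * m) * (m * ε) := by ring
          _ ≤ 1 * (m * ε) := mul_le_mul_of_nonneg_right h1 (by positivity)
          _ = m * ε := one_mul _
      have hmain : (1 + η) * x ^ 2 ≤ |c₀| ^ (2 ^ (n + 1) + 1) := by
        calc (1 + η) * x ^ 2
            = ((1 + η) * |c₀|) * |c₀| ^ (2 ^ (n + 1) + 1) := by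
              rw [hx]; ring
          _ ≤ 1 * |c₀| ^ (2 ^ (n + 1) + 1) := mul_le_mul_of_nonneg_right hc₀ (by positivity)
          _ = |c₀| ^ (2 ^ (n + 1) + 1) := one_mul _
      have hstep : b (n + 1 + 1) ≤ b (n + 1) ^ 2 + ε := hb (n + 1 + 1) (by omega) hn
      have hsq : b (n + 1) ^ 2 ≤ (x + m * ε) ^ 2 :=
        pow_le_pow_left₀ (hb_nonneg _) (ih (by omega)) 2
      have hcast : ((n + 1 + 1 : ℕ) : ℝ) = m + 1 := by rw [hm]; push_cast; ring
      rw [hcast]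
      linarith [add_sq_le_one_add_mul_sq hη0 x (m * ε)]
  intro n hn1 hnN
  obtain ⟨k, rfl⟩ := Nat.exists_eq_add_of_le' hn1
  rw [Nat.add_sub_cancel]
  have hpow : |c₀| ^ (2 ^ k + 1) ≤ |c₀| ^ (2 ^ k) :=
    pow_le_pow_of_le_one hc0 hc1 (Nat.le_succ _)
  exact ⟨key k hnN, by linarith [key k hnN]⟩
end
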